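/- arXiv:2104.01216 — 2 statements merged into one kernel-verified Lean document; each statement's English description precedes it below -/
import Mathlib

section
/- Let N ≥ 1 and let α, β, γ, δ ∈ ℂ satisfy α·δ = β·γ, β ≠ 0 and δ ≠ 0. Then the characteristic polynomial of J_N is det(x·I_{N+1} − J_N) = (x − N·α·δ)^{N+1}, and the eigenspace of J_N for the eigenvalue N·α·δ, i.e. the kernel of J_N − N·α·δ·I_{N+1}, is one-dimensional. Thus J_N has a unique eigenvalue of algebraic multiplicity N+1 and geometric multiplicity 1. -/
open Matrix Polynomial

/-- The generalised Sylvester-Kac matrix `J_N` depending on parameters `α β γ δ`. -/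
noncomputable def Jmat (N : ℕ) (α β γ δ : ℂ) : Matrix (Fin (N+1)) (Fin (N+1)) ℂ :=
  Matrix.of fun k l =>
    if (l : ℕ) = (k : ℕ) + 1 then ((k : ℕ) + 1 : ℂ) * α * γ
    else if (l : ℕ) = (k : ℕ) then ((k : ℕ) : ℂ) * (α * δ + β * γ)
    else if (l : ℕ) + 1 = (k : ℕ) then -((N - (k : ℕ) + 1 : ℕ) : ℂ) * β * δ
    else 0

/-!
`J_N` is the matrix, in the basis of monomials, of the operator
`p ↦ (α + β X) (γ + δ X) p' - N β δ X p` on polynomials of degree at most `N`. This operator sends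
`(α + β X) ^ j` to a combination of itself and of `(α + β X) ^ (j + 1)`, so that `J_N` is similar to
a lower triangular matrix with diagonal entries `j β γ + (N - j) α δ`; these all coincide with
`N α δ` when `α δ = β γ`. Every eigenspace is a line, because the subdiagonal entries of `J_N` do
not vanish: deleting the first row and the last column of `J_N - μ` leaves an invertible triangular
matrix.
-/

section LinearAlgebra

lemma charpoly_eq_of_mul_eq_mul {n R : Type*} [Fintype n] [DecidableEq n] [CommRing R]
    {A B P : Matrix n n R} (hP : IsUnit P.det) (h : A * P = P * B) : A.charpoly = B.charpoly := by
  obtain ⟨U, rfl⟩ := (isUnit_iff_isUnit_det P).mpr hP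
  rw [← charpoly_units_conj U B, ← coe_units_inv, ← h, Units.mul_inv_cancel_right]

variable {R K : Type*} [CommRing R] [IsDomain R] [Field K] {n : ℕ}

lemma le_rank_of_hessenberg {A : Matrix (Fin (n + 1)) (Fin (n + 1)) R}
    (hA : ∀ i j : Fin (n + 1), (j : ℕ) + 1 < i → A i j = 0)
    (hsub : ∀ i : Fin n, A i.succ i.castSucc ≠ 0) : n ≤ A.rank := by
  let B := A.submatrix Fin.succ Fin.castSucc
  have hB : B.IsUpperTriangular := fun i j hji => hA _ _ (Nat.succ_lt_succ hji)
  have hdet : B.det ≠ 0 := by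
    rw [det_of_isUpperTriangular hB]
    exact Finset.prod_ne_zero_iff.mpr fun i _ => hsub i
  calc n = B.rank := by rw [rank_of_det_ne_zero hdet, Fintype.card_fin]
    _ ≤ A.rank := rank_submatrix_le A _ _

lemma finrank_ker_eq_one_of_hessenberg {A : Matrix (Fin (n + 1)) (Fin (n + 1)) K}
    (hA : ∀ i j : Fin (n + 1), (j : ℕ) + 1 < i → A i j = 0)
    (hsub : ∀ i : Fin n, A i.succ i.castSucc ≠ 0) (hdet : A.det = 0) :
    Module.finrank K (LinearMap.ker A.mulVecLin) = 1 := by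
  have hrank : n ≤ Module.finrank K (LinearMap.range A.mulVecLin) := le_rank_of_hessenberg hA hsub
  have hnullity := A.mulVecLin.finrank_range_add_finrank_ker
  rw [Module.finrank_fin_fun] at hnullity
  have hpos : 1 ≤ Module.finrank K (LinearMap.ker A.mulVecLin) := by
    obtain ⟨v, hv, hAv⟩ := exists_mulVec_eq_zero_iff.mpr hdet
    exact Submodule.one_le_finrank_iff.mpr
      ((Submodule.ne_bot_iff _).mpr ⟨v, LinearMap.mem_ker.mpr hAv, hv⟩)
  omega

end LinearAlgebra

lemma natDegree_linear_pow_le {R : Type*} [Semiring R] (a b : R) (n : ℕ) :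
    ((C a * X + C b) ^ n).natDegree ≤ n := by
  simpa only [mul_one] using natDegree_pow_le_of_le n (natDegree_linear_le (a := a) (b := b))

section SylvesterKac

variable {R : Type*} [CommRing R] (N : ℕ) (α β γ δ : R)

/-- The operator `p ↦ (α + β X) (γ + δ X) p' - N β δ X p`, which preserves the polynomials of degree
at most `N`. -/
noncomputable def sylvesterKacOp : R[X] →ₗ[R] R[X] :=
  LinearMap.mulLeft R ((C β * X + C α) * (C δ * X + C γ)) ∘ₗ derivative -
    LinearMap.mulLeft R (C (N * β * δ) * X)

/-- The matrix of `sylvesterKacOp` on the polynomials of degree at most `N`, in the basis of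
monomials. -/
noncomputable def sylvesterKac : Matrix (Fin (N + 1)) (Fin (N + 1)) R :=
  Matrix.of fun k l => (sylvesterKacOp N α β γ δ (X ^ (l : ℕ))).coeff k

/-- The eigenvalue `j β γ + (N - j) α δ` of the Sylvester-Kac matrix, for `j ≤ N`. -/
def sylvesterKacEigenvalue (j : ℕ) : R :=
  j * (β * γ) + (N - j) * (α * δ)

lemma sylvesterKacOp_apply (p : R[X]) :
    sylvesterKacOp N α β γ δ p =
      (C β * X + C α) * (C δ * X + C γ) * derivative p - C (N * β * δ) * X * p :=
  rfl

lemma sylvesterKacOp_X_pow (l : ℕ) :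
    sylvesterKacOp N α β γ δ (X ^ l) =
      C (l * α * γ) * X ^ (l - 1) + C (l * (α * δ + β * γ)) * X ^ l
        - C ((N - l) * β * δ) * X ^ (l + 1) := by
  rw [sylvesterKacOp_apply, derivative_X_pow]
  cases l with
  | zero => simp
  | succ l =>
    simp only [Nat.add_sub_cancel, C_mul, C_add, C_sub]
    ring

lemma sylvesterKacOp_linear_pow (j : ℕ) :
    sylvesterKacOp N α β γ δ ((C β * X + C α) ^ j) =
      C (sylvesterKacEigenvalue N α β γ δ j) * (C β * X + C α) ^ j
        - C ((N - j) * δ) * (C β * X + C α) ^ (j + 1) := by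
  have hderiv : (C β * X + C α) * derivative ((C β * X + C α) ^ j) =
      C (j * β) * (C β * X + C α) ^ j := by
    cases j with
    | zero => simp
    | succ j =>
      simp only [derivative_pow_succ, derivative_add, derivative_C_mul, derivative_X, derivative_C,
        C_mul, C_add, C_1, map_natCast]
      push_cast
      ring
  rw [sylvesterKacOp_apply, sylvesterKacEigenvalue]
  simp only [C_mul, C_add, C_sub] at hderiv ⊢
  linear_combination (C δ * X + C γ) * hderiv

lemma sylvesterKac_apply (k l : Fin (N + 1)) :
    sylvesterKac N α β γ δ k l =
      if (l : ℕ) = k + 1 then (k + 1) * α * γ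
      else if (l : ℕ) = k then k * (α * δ + β * γ)
      else if (l : ℕ) + 1 = k then -((N - k + 1 : ℕ) : R) * β * δ
      else 0 := by
  obtain ⟨k, hk⟩ := k
  obtain ⟨l, hl⟩ := l
  simp only [sylvesterKac, of_apply, sylvesterKacOp_X_pow, coeff_sub, coeff_add, coeff_C_mul_X_pow]
  have hcast : ((N - k + 1 : ℕ) : R) = N - k + 1 := by
    rw [Nat.cast_add_one, Nat.cast_sub (Nat.le_of_lt_succ hk)]
  rw [hcast]
  rcases l with _ | l <;> simp only [zero_tsub, add_tsub_cancel_right] <;> split_ifs <;>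
    first | contradiction | omega | (subst_vars; push_cast; ring)

lemma sylvesterKac_mulVec_coeff {p : R[X]} (hp : p.natDegree ≤ N) :
    (sylvesterKac N α β γ δ *ᵥ fun l : Fin (N + 1) => p.coeff l) =
      fun k : Fin (N + 1) => (sylvesterKacOp N α β γ δ p).coeff k := by
  ext k
  conv_rhs => rw [p.as_sum_range_C_mul_X_pow' (Nat.lt_succ_of_le hp)]
  simp only [mulVec, dotProduct, sylvesterKac, of_apply, map_sum, finsetSum_coeff, C_mul', map_smul,
    coeff_smul, smul_eq_mul]
  rw [← Fin.sum_univ_eq_sum_range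
    fun l => p.coeff l * (sylvesterKacOp N α β γ δ (X ^ l)).coeff k]
  exact Fintype.sum_congr _ _ fun l => mul_comm _ _

/-- The change of basis that triangularises `sylvesterKac` when `β` is a unit: its columns are the
coefficients of the powers `(α + β X) ^ j`, for `j ≤ N`. -/
noncomputable def linearPowMatrix : Matrix (Fin (N + 1)) (Fin (N + 1)) R :=
  Matrix.of fun i j => ((C β * X + C α) ^ (j : ℕ)).coeff i

lemma isUnit_det_linearPowMatrix (hβ : IsUnit β) : IsUnit (linearPowMatrix N α β).det := by
  have hupper : (linearPowMatrix N α β).IsUpperTriangular :=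
    matrixOfPolynomials_blockTriangular _ fun j => natDegree_linear_pow_le β α j
  have hdiag (j : Fin (N + 1)) : linearPowMatrix N α β j j = β ^ (j : ℕ) := by
    simpa [linearPowMatrix] using
      coeff_pow_of_natDegree_le (m := j) (natDegree_linear_le (a := β) (b := α))
  simp only [det_of_isUpperTriangular hupper, hdiag]
  exact IsUnit.prod_univ_iff.mpr fun j => hβ.pow j

/-- The matrix of `sylvesterKacOp` in the powers `(α + β X) ^ j`, for `j ≤ N`; these form a basis
when `β` is a unit. -/
def sylvesterKacTriangular : Matrix (Fin (N + 1)) (Fin (N + 1)) R :=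
  Matrix.of fun i j =>
    (if (i : ℕ) = j then sylvesterKacEigenvalue N α β γ δ j else 0) -
      if (i : ℕ) = j + 1 then (N - j) * δ else 0

lemma sylvesterKac_mul_linearPowMatrix :
    sylvesterKac N α β γ δ * linearPowMatrix N α β =
      linearPowMatrix N α β * sylvesterKacTriangular N α β γ δ := by
  ext k j
  have hj : (j : ℕ) ≤ N := Nat.le_of_lt_succ j.2
  let q : R[X] := C β * X + C α
  have htop : (if (j : ℕ) < N then (q ^ (j + 1 : ℕ)).coeff k * ((N - j) * δ) else 0) =
      (N - j) * δ * (q ^ (j + 1 : ℕ)).coeff k := by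
    split_ifs with h
    · rw [mul_comm]
    · rw [hj.antisymm (not_lt.mp h), sub_self, zero_mul, zero_mul]
  calc (sylvesterKac N α β γ δ * linearPowMatrix N α β) k j
    _ = (sylvesterKacOp N α β γ δ (q ^ (j : ℕ))).coeff k :=
      congrFun (sylvesterKac_mulVec_coeff N α β γ δ
        ((natDegree_linear_pow_le β α j).trans hj)) k
    _ = sylvesterKacEigenvalue N α β γ δ j * (q ^ (j : ℕ)).coeff k
          - (N - j) * δ * (q ^ (j + 1 : ℕ)).coeff k := by
      rw [sylvesterKacOp_linear_pow, coeff_sub, coeff_C_mul, coeff_C_mul]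
    _ = ∑ i ∈ Finset.range (N + 1), (q ^ i).coeff k *
          ((if i = j then sylvesterKacEigenvalue N α β γ δ j else 0) -
            if i = j + 1 then (N - j) * δ else 0) := by
      simp only [mul_sub, mul_ite, mul_zero, Finset.sum_sub_distrib, Finset.sum_ite_eq',
        Finset.mem_range, j.2, if_true, Nat.add_lt_add_iff_right]
      rw [htop, mul_comm (coeff _ _)]
    _ = (linearPowMatrix N α β * sylvesterKacTriangular N α β γ δ) k j :=
      (Fin.sum_univ_eq_sum_range _ _).symm

lemma charpoly_sylvesterKacTriangular :
    (sylvesterKacTriangular N α β γ δ).charpoly =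
      ∏ j ∈ Finset.range (N + 1), (X - C (sylvesterKacEigenvalue N α β γ δ j)) := by
  have hupper : (sylvesterKacTriangular N α β γ δ)ᵀ.IsUpperTriangular := fun i j hji => by
    have : (j : ℕ) < i := hji
    simp only [sylvesterKacTriangular, transpose_apply, of_apply]
    rw [if_neg (by omega), if_neg (by omega), sub_zero]
  rw [← charpoly_transpose, charpoly_of_isUpperTriangular _ hupper,
    ← Fin.prod_univ_eq_prod_range fun j => X - C (sylvesterKacEigenvalue N α β γ δ j)]
  simp [sylvesterKacTriangular]

theorem charpoly_sylvesterKac (hβ : IsUnit β) :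
    (sylvesterKac N α β γ δ).charpoly =
      ∏ j ∈ Finset.range (N + 1), (X - C (sylvesterKacEigenvalue N α β γ δ j)) :=
  (charpoly_eq_of_mul_eq_mul (isUnit_det_linearPowMatrix N α β hβ)
    (sylvesterKac_mul_linearPowMatrix N α β γ δ)).trans
      (charpoly_sylvesterKacTriangular N α β γ δ)

end SylvesterKac

section Eigenspace

variable {K : Type*} [Field K] [CharZero K] (N : ℕ) (α β γ δ : K)

theorem finrank_ker_sylvesterKac_sub_eq_one (hβ : β ≠ 0) (hδ : δ ≠ 0) {μ : K}
    (hμ : (sylvesterKac N α β γ δ).charpoly.IsRoot μ) :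
    Module.finrank K (LinearMap.ker (sylvesterKac N α β γ δ - μ • 1).mulVecLin) = 1 := by
  refine finrank_ker_eq_one_of_hessenberg (fun i j hij => ?_) (fun i => ?_) ?_
  · have hne : i ≠ j := by rintro rfl; omega
    rw [Matrix.sub_apply, Matrix.smul_apply, one_apply_ne hne, sylvesterKac_apply,
      if_neg (by omega), if_neg (by omega), if_neg (by omega), smul_zero, sub_zero]
  · rw [Matrix.sub_apply, Matrix.smul_apply, one_apply_ne i.castSucc_lt_succ.ne',
      sylvesterKac_apply, Fin.val_castSucc, Fin.val_succ, if_neg (by omega), if_neg (by omega),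
      if_pos rfl, smul_zero, sub_zero]
    exact mul_ne_zero (mul_ne_zero (neg_ne_zero.mpr (Nat.cast_ne_zero.mpr (by omega))) hβ) hδ
  · rw [IsRoot, eval_charpoly] at hμ
    rw [← neg_sub, det_neg, smul_one_eq_diagonal, ← scalar_apply, hμ, mul_zero]

theorem stmt_9_general (hβ : β ≠ 0) (hδ : δ ≠ 0) :
    (sylvesterKac N α β γ δ).charpoly =
        ∏ j ∈ Finset.range (N + 1), (X - C (sylvesterKacEigenvalue N α β γ δ j)) ∧
      ∀ j ≤ N, Module.finrank K (LinearMap.ker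
        (sylvesterKac N α β γ δ - sylvesterKacEigenvalue N α β γ δ j • 1).mulVecLin) = 1 := by
  have hcharpoly := charpoly_sylvesterKac N α β γ δ hβ.isUnit
  refine ⟨hcharpoly, fun j hj => finrank_ker_sylvesterKac_sub_eq_one N α β γ δ hβ hδ ?_⟩
  rw [hcharpoly, IsRoot, eval_prod]
  exact Finset.prod_eq_zero (Finset.mem_range_succ_iff.mpr hj) (by simp)

end Eigenspace

lemma Jmat_eq_sylvesterKac (N : ℕ) (α β γ δ : ℂ) : Jmat N α β γ δ = sylvesterKac N α β γ δ :=
  Matrix.ext fun k l => (sylvesterKac_apply N α β γ δ k l).symm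

lemma sylvesterKacEigenvalue_of_mul_eq_mul {R : Type*} [CommRing R] (N : ℕ) {α β γ δ : R}
    (h : α * δ = β * γ) (j : ℕ) : sylvesterKacEigenvalue N α β γ δ j = N * α * δ := by
  rw [sylvesterKacEigenvalue, ← h]
  ring

theorem stmt_9 (N : ℕ) (hN : 1 ≤ N) (α β γ δ : ℂ)
    (hD : α * δ = β * γ) (hβ : β ≠ 0) (hδ : δ ≠ 0) :
    (Jmat N α β γ δ).charpoly = (X - C ((N : ℂ) * α * δ)) ^ (N + 1) ∧
      Module.finrank ℂ
        (LinearMap.ker (Jmat N α β γ δ - ((N : ℂ) * α * δ) • 1).mulVecLin) = 1 := by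
  have hμ := sylvesterKacEigenvalue_of_mul_eq_mul N hD
  rw [Jmat_eq_sylvesterKac, ← hμ N]
  exact (stmt_9_general N α β γ δ hβ hδ).imp (fun h => by simp [h, hμ]) fun h => h N le_rfl
end

section
/- For every N ∈ ℕ, the characteristic polynomial of the matrix G_N factors as det(x·I_{N+1} − G_N) = Π_{j=0}^{N} (x − 2·(2j − N)) over ℚ (equivalently over ℂ); in particular, the eigenvalues of G_N are exactly the N+1 even integers 2(2j − N), j = 0, …, N. -/
open Matrix Polynomial

/-- The matrix `G_N` of da Fonseca–Kılıç, over `ℚ`. -/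
def Gmat (N : ℕ) : Matrix (Fin (N+1)) (Fin (N+1)) ℚ :=
  Matrix.of fun k l =>
    if (l : ℕ) = (k : ℕ) + 1 then ((k : ℕ) + 1 : ℚ)
    else if (l : ℕ) + 1 = (k : ℕ) then ((2 * N + 3 - (k : ℕ) : ℕ) : ℚ)
    else 0

/-!
`G_N` is the leading principal block of the Kac–Sylvester matrix of order `M = 2N + 2`, which acts
on generating functions as `p ↦ (1 - X²) p' + M X p` and has the eigenvectors
`(1 + X)^a (1 - X)^b`, `a + b = M`, with eigenvalues `a - b`. When `a` and `b` are odd this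
polynomial is antipalindromic, so its middle coefficient, of index `N + 1`, vanishes, and its first
`N + 1` coefficients form an eigenvector of the block. The `N + 1` choices `a = 2j + 1` give
distinct eigenvalues `2(2j - N)`, hence all roots of the characteristic polynomial.
-/

lemma eq_prod_X_sub_C_of_injective {R ι : Type*} [CommRing R] [IsDomain R] [Fintype ι] {p : R[X]}
    (hp : p.Monic) (hdeg : p.natDegree = Fintype.card ι) {μ : ι → R} (hμ : μ.Injective)
    (hroot : ∀ i, p.IsRoot (μ i)) : p = ∏ i, (X - C (μ i)) := by
  have hprod : (∏ i, (X - C (μ i))).natDegree = Fintype.card ι :=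
    natDegree_finsetProd_X_sub_C_eq_card _ _
  have hprod_monic : (∏ i, (X - C (μ i))).Monic := monic_prod_X_sub_C _ _
  refine eq_of_degree_le_of_eval_index_eq Finset.univ hμ.injOn ?_ ?_ ?_ fun i _ => ?_
  · exact degree_le_of_natDegree_le hdeg.le
  · rw [degree_eq_natDegree hp.ne_zero, degree_eq_natDegree hprod_monic.ne_zero, hdeg, hprod]
  · rw [hp.leadingCoeff, hprod_monic.leadingCoeff]
  · rw [(hroot i).eq_zero, eval_prod, Finset.prod_eq_zero (Finset.mem_univ i) (by simp)]

lemma exists_mulVec_eq_smul_iff_isRoot_charpoly {n R : Type*} [Fintype n] [DecidableEq n]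
    [CommRing R] [IsDomain R] (A : Matrix n n R) (x : R) :
    (∃ u : n → R, u ≠ 0 ∧ A *ᵥ u = x • u) ↔ A.charpoly.IsRoot x := by
  rw [← charpoly_toLin', ← Module.End.hasEigenvalue_iff_isRoot_charpoly]
  constructor
  · rintro ⟨u, hu, hAu⟩
    exact Module.End.hasEigenvalue_of_hasEigenvector
      (Module.End.hasEigenvector_iff.mpr ⟨Module.End.mem_eigenspace_iff.mpr hAu, hu⟩)
  · intro h
    obtain ⟨u, hu⟩ := h.exists_hasEigenvector
    exact ⟨u, hu.2, hu.apply_eq_smul⟩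

lemma reflect_pow_of_natDegree_le {R : Type*} [CommSemiring R] {p : R[X]} {d : ℕ}
    (hp : p.natDegree ≤ d) (n : ℕ) : reflect (n * d) (p ^ n) = reflect d p ^ n := by
  induction n with
  | zero => simp
  | succ n ih =>
    rw [pow_succ, add_one_mul, reflect_mul _ _ (natDegree_pow_le_of_le n hp) hp, ih, pow_succ]

lemma mul_derivative_pow_self {R : Type*} [CommSemiring R] (p : R[X]) (n : ℕ) :
    p * derivative (p ^ n) = n * derivative p * p ^ n := by
  cases n with
  | zero => simp
  | succ n =>
    rw [derivative_pow_succ]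
    push_cast
    simp only [map_add, map_natCast, map_one]
    ring

section Kac

variable {R : Type*} [CommRing R]

/-- The Kac–Sylvester matrix of order `M`, with superdiagonal `1, …, M` and subdiagonal `M, …, 1`,
as an operator on generating functions: see `coeff_zero_kacOperator` and
`coeff_succ_kacOperator`. -/
noncomputable def kacOperator (M : ℕ) (p : R[X]) : R[X] :=
  (1 - X ^ 2) * derivative p + (M : R[X]) * (X * p)

lemma coeff_zero_kacOperator (M : ℕ) (p : R[X]) : (kacOperator M p).coeff 0 = p.coeff 1 := by
  simp [kacOperator, mul_coeff_zero, coeff_derivative]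

lemma coeff_succ_kacOperator (M k : ℕ) (p : R[X]) :
    (kacOperator M p).coeff (k + 1) = (k + 2) * p.coeff (k + 2) + (M - k) * p.coeff k := by
  have hX : (X * derivative p).coeff k = k * p.coeff k := by
    cases k with
    | zero => simp
    | succ k => rw [coeff_X_mul, coeff_derivative, mul_comm]; push_cast; rfl
  rw [kacOperator, sub_mul, one_mul, sq, mul_assoc, coeff_add, coeff_sub, coeff_natCast_mul,
    coeff_X_mul, coeff_X_mul, hX, coeff_derivative]
  push_cast
  ring

variable (R) in
/-- The generating function of the eigenvector of the Kac–Sylvester matrix of order `a + b` for the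
eigenvalue `a - b`. -/
noncomputable def kacPoly (a b : ℕ) : R[X] :=
  (1 + X) ^ a * (1 - X) ^ b

lemma kacOperator_kacPoly (a b : ℕ) :
    kacOperator (a + b) (kacPoly R a b) = C (a - b : R) * kacPoly R a b := by
  have hadd := mul_derivative_pow_self (1 + X : R[X]) a
  have hsub := mul_derivative_pow_self (1 - X : R[X]) b
  simp only [derivative_add, derivative_sub, derivative_one, derivative_X] at hadd hsub
  simp only [kacOperator, kacPoly, derivative_mul, map_sub, map_natCast]
  push_cast
  linear_combination (1 - X) * (1 - X) ^ b * hadd + (1 + X) * (1 + X) ^ a * hsub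

lemma coeff_zero_kacPoly (a b : ℕ) : (kacPoly R a b).coeff 0 = 1 := by
  simp [kacPoly, coeff_zero_eq_eval_zero]

lemma reflect_kacPoly (a b : ℕ) :
    reflect (a + b) (kacPoly R a b) = (-1) ^ b * kacPoly R a b := by
  have hadd : (1 + X : R[X]).natDegree ≤ 1 := by compute_degree
  have hsub : (1 - X : R[X]).natDegree ≤ 1 := by compute_degree
  have reflect_add_pow : reflect a ((1 + X : R[X]) ^ a) = (1 + X) ^ a := by
    simpa [reflect_add, add_comm] using reflect_pow_of_natDegree_le hadd a
  have reflect_sub_pow : reflect b ((1 - X : R[X]) ^ b) = (-1) ^ b * (1 - X) ^ b := by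
    simpa [reflect_sub, ← mul_pow] using reflect_pow_of_natDegree_le hsub b
  rw [kacPoly, reflect_mul _ _ (by simpa using natDegree_pow_le_of_le a hadd)
    (by simpa using natDegree_pow_le_of_le b hsub), reflect_add_pow, reflect_sub_pow]
  ring

lemma coeff_kacPoly_eq_zero_of_odd [IsAddTorsionFree R] {a b n : ℕ} (hb : Odd b)
    (hab : a + b = n + n) : (kacPoly R a b).coeff n = 0 := by
  have h := congrArg (coeff · n) (reflect_kacPoly (R := R) a b)
  simpa [coeff_reflect, hab, revAt_le, hb.neg_one_pow, self_eq_neg] using h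

end Kac

lemma Gmat_zero_apply {N : ℕ} (l : Fin (N + 1)) :
    Gmat N 0 l = if (l : ℕ) = 1 then 1 else 0 := by
  simp [Gmat]

lemma Gmat_succ_apply {N k : ℕ} (hk : k + 1 < N + 1) (l : Fin (N + 1)) :
    Gmat N ⟨k + 1, hk⟩ l =
      if (l : ℕ) = k + 2 then (k + 2 : ℚ)
      else if (l : ℕ) = k then (2 * N + 2 : ℕ) - k
      else 0 := by
  have hsub : ((2 * N + 3 - (k + 1) : ℕ) : ℚ) = (2 * N + 2 : ℕ) - k := by
    rw [← Nat.cast_sub (by lia), show 2 * N + 3 - (k + 1) = 2 * N + 2 - k by lia]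
  simp only [Gmat, of_apply, hsub, Nat.add_right_cancel_iff]
  push_cast
  ring_nf

lemma Gmat_mulVec_apply_zero {N : ℕ} {c : ℕ → ℚ} (hc : c (N + 1) = 0) :
    (Gmat N *ᵥ fun l => c l) 0 = c 1 := by
  simp only [mulVec, dotProduct, Gmat_zero_apply]
  rw [Fin.sum_univ_eq_sum_range (fun l => (if l = 1 then 1 else 0) * c l),
    Finset.sum_eq_single 1 (by simp_all)]
  · simp
  · intro hN
    obtain rfl : N = 0 := by simpa using hN
    rw [hc, mul_zero]

lemma Gmat_mulVec_apply_succ {N k : ℕ} {c : ℕ → ℚ} (hc : c (N + 1) = 0) (hk : k + 1 < N + 1) :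
    (Gmat N *ᵥ fun l => c l) ⟨k + 1, hk⟩
      = (k + 2) * c (k + 2) + ((2 * N + 2 : ℕ) - k) * c k := by
  let row (l : ℕ) : ℚ :=
    if l = k + 2 then k + 2 else if l = k then (2 * N + 2 : ℕ) - k else 0
  simp only [mulVec, dotProduct, Gmat_succ_apply]
  rw [Fin.sum_univ_eq_sum_range (fun l => row l * c l), Finset.sum_eq_add (k + 2) k (by lia)]
  · simp [row]
  · rintro l - ⟨hl, hl'⟩
    simp [row, hl, hl']
  · intro hN
    rw [Finset.mem_range] at hN
    rw [show k + 2 = N + 1 by lia, hc, mul_zero]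
  · exact fun hN => absurd (Finset.mem_range.mpr (by lia)) hN

lemma Gmat_mulVec_coeff {N : ℕ} {p : ℚ[X]} (hp : p.coeff (N + 1) = 0) :
    Gmat N *ᵥ (fun l => p.coeff l)
      = fun k : Fin (N + 1) => (kacOperator (2 * N + 2) p).coeff k := by
  ext ⟨k, hk⟩
  cases k with
  | zero => exact (Gmat_mulVec_apply_zero hp).trans (coeff_zero_kacOperator _ p).symm
  | succ k => exact (Gmat_mulVec_apply_succ hp hk).trans (coeff_succ_kacOperator _ k p).symm

lemma Gmat_mulVec_kacPoly {N a b : ℕ} (hb : Odd b) (hab : a + b = 2 * N + 2) :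
    Gmat N *ᵥ (fun l => (kacPoly ℚ a b).coeff l)
      = (a - b : ℚ) • fun l : Fin (N + 1) => (kacPoly ℚ a b).coeff l := by
  have hmid : (kacPoly ℚ a b).coeff (N + 1) = 0 := coeff_kacPoly_eq_zero_of_odd hb (by lia)
  rw [Gmat_mulVec_coeff hmid, ← hab, kacOperator_kacPoly]
  simp only [coeff_C_mul]
  rfl

lemma isRoot_charpoly_Gmat (N : ℕ) (j : Fin (N + 1)) :
    (Gmat N).charpoly.IsRoot (2 * (2 * (j : ℕ) - (N : ℚ))) := by
  obtain ⟨m, hm⟩ := Nat.exists_eq_add_of_le (Fin.is_le j)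
  have heig := Gmat_mulVec_kacPoly (N := N) (a := 2 * j + 1) (odd_two_mul_add_one m) (by lia)
  have hval : ((2 * j + 1 : ℕ) - (2 * m + 1 : ℕ) : ℚ) = 2 * (2 * (j : ℕ) - (N : ℚ)) := by
    have hN : (N : ℚ) = (j : ℕ) + m := mod_cast hm
    rw [hN]
    push_cast
    ring
  rw [← exists_mulVec_eq_smul_iff_isRoot_charpoly, ← hval]
  refine ⟨_, fun h => ?_, heig⟩
  simpa [coeff_zero_kacPoly] using congrFun h 0

lemma charpoly_Gmat (N : ℕ) :
    (Gmat N).charpoly = ∏ j : Fin (N + 1), (X - C (2 * (2 * (j : ℕ) - (N : ℚ)))) := by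
  refine eq_prod_X_sub_C_of_injective (charpoly_monic _) (charpoly_natDegree_eq_dim _) ?_
    (isRoot_charpoly_Gmat N)
  intro i j h
  simpa [Fin.ext_iff] using h

theorem stmt_11 (N : ℕ) :
    (Gmat N).charpoly =
      (∏ j : Fin (N+1), (X - C (2 * (2 * (j : ℕ) - (N : ℚ))))) ∧
      (∀ x : ℚ, (∃ u : Fin (N+1) → ℚ, u ≠ 0 ∧ (Gmat N).mulVec u = x • u) ↔
        ∃ j : Fin (N+1), x = 2 * (2 * (j : ℕ) - (N : ℚ))) := by
  refine ⟨charpoly_Gmat N, fun x => ?_⟩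
  rw [exists_mulVec_eq_smul_iff_isRoot_charpoly, charpoly_Gmat, IsRoot.def, eval_prod,
    Finset.prod_eq_zero_iff]
  simp [sub_eq_zero]
end
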